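/- Let σ > 0 and N ≥ 2 an integer, assume Π⁺ is continuously differentiable on (m, M), that the limit Ψ⁺ₓ(M) = lim_{x→M⁻} (d/dx)Ψ⁺(x) exists, and that there exist an integer n ≥ 0 and a real constant k ∈ (0, ∞) such that lim_{x→M⁻} (Ψ⁺(x) − x)/(M − x)^{n+1} = 1/k. Let R : ℝ → [m, M] be a nondecreasing solution of equation (C⁺) with R(x) < M for all x and lim_{x→∞} R(x) = M. Then Π⁺ ∘ R is regularly varying at ∞ of index −Ψ⁺ₓ(M)/(1 − Ψ⁺ₓ(M)/N), i.e. for every x > 0 one has Π⁺(R(αx))/Π⁺(R(α)) → x^{−Ψ⁺ₓ(M)/(1−Ψ⁺ₓ(M)/N)} as α → ∞. -/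

import Mathlib

open MeasureTheory Filter Set

/-- Centered Gaussian density with variance `σ²`. -/
noncomputable def gq (σ z : ℝ) : ℝ :=
  Real.exp (-(z ^ 2) / (2 * σ ^ 2)) / (σ * Real.sqrt (2 * Real.pi))

/-- The averaged kernel `q̄(σ,x,z)`. -/
noncomputable def gqbar (σ x z : ℝ) : ℝ :=
  if x = 0 then gq σ z else (1 / x) * ∫ y in (0:ℝ)..x, gq σ (y - z)

/-- `Φ⁺(y) = E[V·1_{V>y}]`. -/
noncomputable def Phip {Ω : Type*} [MeasurableSpace Ω] (P : Measure Ω) (V : Ω → ℝ) (y : ℝ) : ℝ :=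
  ∫ ω in {ω | V ω > y}, V ω ∂P

/-- `Π⁺(y) = P(V > y)`. -/
noncomputable def Pip {Ω : Type*} [MeasurableSpace Ω] (P : Measure Ω) (V : Ω → ℝ) (y : ℝ) : ℝ :=
  (P {ω | V ω > y}).toReal

/-- `Φ⁻(y) = E[V·1_{V≤y}]`. -/
noncomputable def Phim {Ω : Type*} [MeasurableSpace Ω] (P : Measure Ω) (V : Ω → ℝ) (y : ℝ) : ℝ :=
  ∫ ω in {ω | V ω ≤ y}, V ω ∂P

/-- `Π⁻(y) = P(V ≤ y)`. -/
noncomputable def Pim {Ω : Type*} [MeasurableSpace Ω] (P : Measure Ω) (V : Ω → ℝ) (y : ℝ) : ℝ :=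
  (P {ω | V ω ≤ y}).toReal

/-- `Ψ⁺ = Φ⁺/Π⁺`. -/
noncomputable def Psip {Ω : Type*} [MeasurableSpace Ω] (P : Measure Ω) (V : Ω → ℝ) (y : ℝ) : ℝ :=
  Phip P V y / Pip P V y

/-- `Ψ⁻ = Φ⁻/Π⁻`. -/
noncomputable def Psim {Ω : Type*} [MeasurableSpace Ω] (P : Measure Ω) (V : Ω → ℝ) (y : ℝ) : ℝ :=
  Phim P V y / Pim P V y

/-- `φ⁺_g`. -/
noncomputable def phip {Ω : Type*} [MeasurableSpace Ω] (P : Measure Ω) (V : Ω → ℝ)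
    (σ : ℝ) (g : ℝ → ℝ) (x : ℝ) : ℝ :=
  (∫ z, Phip P V (g z) * gq σ (x - z)) / (∫ z, Pip P V (g z) * gq σ (x - z))

/-- `φ⁻_g`. -/
noncomputable def phim {Ω : Type*} [MeasurableSpace Ω] (P : Measure Ω) (V : Ω → ℝ)
    (σ : ℝ) (g : ℝ → ℝ) (x : ℝ) : ℝ :=
  (∫ z, Phim P V (g z) * gq σ (x - z)) / (∫ z, Pim P V (g z) * gq σ (x - z))

/-- `φ_g`, equal to `φ⁺_g` on `[0,∞)` and `φ⁻_g` on `(−∞,0)`. -/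
noncomputable def phig {Ω : Type*} [MeasurableSpace Ω] (P : Measure Ω) (V : Ω → ℝ)
    (σ : ℝ) (g : ℝ → ℝ) (x : ℝ) : ℝ :=
  if 0 ≤ x then phip P V σ g x else phim P V σ g x

/-- The interior of the support of the law of `V` is `(m, M)` (with `V` bounded). -/
def SuppIoo {Ω : Type*} [MeasurableSpace Ω] (P : Measure Ω) (V : Ω → ℝ) (m M : ℝ) : Prop :=
  m < M ∧ (∀ᵐ ω ∂P, V ω ∈ Set.Icc m M) ∧
    (∀ y < M, 0 < P {ω | V ω > y}) ∧ (∀ y, m < y → 0 < P {ω | V ω ≤ y})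

/-- Equation (E). -/
def SolvesE {Ω : Type*} [MeasurableSpace Ω] (P : Measure Ω) (V : Ω → ℝ)
    (σ : ℝ) (N : ℕ) (F : ℝ → ℝ) : Prop :=
  ∀ x : ℝ, F x =
    ∫ z, ((1 / (N:ℝ)) * gq σ (x - z) + (((N:ℝ) - 1) / (N:ℝ)) * gqbar σ x z) * phig P V σ F z

/-- Equation (C⁺). -/
def SolvesCp {Ω : Type*} [MeasurableSpace Ω] (P : Measure Ω) (V : Ω → ℝ)
    (σ : ℝ) (N : ℕ) (R : ℝ → ℝ) : Prop :=
  ∀ x : ℝ, R x =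
    (∫ z in Set.Ioi (0:ℝ),
      ((1 / (N:ℝ)) * gq σ (x - z) + (((N:ℝ) - 1) / (N:ℝ)) * gqbar σ x z) *
        ∫ y, Psip P V (R y) * gq σ (z - y)) +
    (∫ ω, V ω ∂P) *
      ∫ z in Set.Iio (0:ℝ),
        ((1 / (N:ℝ)) * gq σ (x - z) + (((N:ℝ) - 1) / (N:ℝ)) * gqbar σ x z)

/-!
Write `ρ = M - R`, `t = M - Ψ⁺ ∘ R`, and let `B x = (1/x) ∫₀ˣ e` be the running mean of the Gaussian
smoothing `e` of (essentially) `t`. Equation (C⁺) says that `ρ = e / N + (1 - 1/N) B` on `(0, ∞)`,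
and monotonicity traps `e x` between `t (x ± √x)` up to `exp (-√x / 2)`. Since `t` is
asymptotically `ρ - κ ρ ^ (n + 1)` with `κ = 1 / k`, eliminating `t` leaves a perturbed contraction
for the normalized gap `(B - e) / B ^ (n + 1)`, with factor `L / N < 1`; the gap therefore tends to
`κ / (1 - L / N)`. As `B' = -(B - e) / x`, this determines the increments of `∫ ds / s ^ (n + 1)`
along `B`, hence along `ρ`: they tend to `κ / (1 - L / N) * log x` between `α` and `α x`. Finally
`(Ψ⁺)' = -(Π⁺)' / Π⁺ * (Ψ⁺ - id)` makes `log Π⁺` comparable to that primitive with ratio `-L k`.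
-/

section IncrementComparison

open Topology

variable {ι : Type*} {l : Filter ι} {F : Filter ℝ} {f g f' g' : ℝ → ℝ} {c d : ℝ} {u v : ι → ℝ}

theorem isLittleO_sub_sub_mul_sub_of_hasDerivAt [TendstoIxxClass Icc F F]
    (hf : ∀ᶠ y in F, HasDerivAt f (f' y) y) (hg : ∀ᶠ y in F, HasDerivAt g (g' y) y)
    (hg0 : ∀ᶠ y in F, g' y ≠ 0) (hc : Tendsto (fun y => f' y / g' y) F (𝓝 c))
    (hu : Tendsto u l F) (hv : Tendsto v l F) :
    (fun i => f (v i) - f (u i) - c * (g (v i) - g (u i))) =o[l]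
      fun i => g (v i) - g (u i) := by
  refine Asymptotics.isLittleO_iff.2 fun ε hε => ?_
  have hnear : ∀ᶠ i in l, ∀ y ∈ uIcc (u i) (v i), HasDerivAt f (f' y) y ∧ HasDerivAt g (g' y) y ∧
      g' y ≠ 0 ∧ |f' y / g' y - c| < ε :=
    (hu.uIcc hv).eventually (hf.and (hg.and (hg0.and
      (hc.eventually (Metric.ball_mem_nhds c hε))))).smallSets
  filter_upwards [hnear] with i hi
  have hmean : ∀ a b : ℝ, a < b → (∀ y ∈ Icc a b, HasDerivAt f (f' y) y ∧ HasDerivAt g (g' y) y ∧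
      g' y ≠ 0 ∧ |f' y / g' y - c| < ε) → |f b - f a - c * (g b - g a)| ≤ ε * |g b - g a| := by
    intro a b hab h
    obtain ⟨y, hy, hfg⟩ := exists_ratio_hasDerivAt_eq_ratio_slope f f' hab
      (fun y hy => (h y hy).1.continuousAt.continuousWithinAt)
      (fun y hy => (h y (Ioo_subset_Icc_self hy)).1) g g'
      (fun y hy => (h y hy).2.1.continuousAt.continuousWithinAt)
      (fun y hy => (h y (Ioo_subset_Icc_self hy)).2.1)
    obtain ⟨-, -, hg'y, hyε⟩ := h y (Ioo_subset_Icc_self hy)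
    have hmvt : f b - f a - c * (g b - g a) = (f' y / g' y - c) * (g b - g a) := by
      field_simp
      linear_combination -hfg
    rw [hmvt, abs_mul]
    gcongr
  rw [Real.norm_eq_abs, Real.norm_eq_abs]
  rcases lt_trichotomy (u i) (v i) with huv | huv | huv
  · exact hmean _ _ huv (uIcc_of_le huv.le ▸ hi)
  · simp [huv]
  · have := hmean _ _ huv (uIcc_of_ge huv.le ▸ hi)
    rw [← abs_neg, abs_sub_comm (g (v i))]
    convert this using 2
    ring

theorem tendsto_sub_of_tendsto_div_deriv [TendstoIxxClass Icc F F]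
    (hf : ∀ᶠ y in F, HasDerivAt f (f' y) y) (hg : ∀ᶠ y in F, HasDerivAt g (g' y) y)
    (hg0 : ∀ᶠ y in F, g' y ≠ 0) (hc : Tendsto (fun y => f' y / g' y) F (𝓝 c))
    (hu : Tendsto u l F) (hv : Tendsto v l F)
    (hd : Tendsto (fun i => g (v i) - g (u i)) l (𝓝 d)) :
    Tendsto (fun i => f (v i) - f (u i)) l (𝓝 (c * d)) := by
  have herr : Tendsto (fun i => f (v i) - f (u i) - c * (g (v i) - g (u i))) l (𝓝 0) :=
    (Asymptotics.isLittleO_one_iff ℝ).1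
      ((isLittleO_sub_sub_mul_sub_of_hasDerivAt hf hg hg0 hc hu hv).trans_isBigO
        (hd.isBigO_one ℝ))
  simpa only [sub_add_cancel, zero_add] using herr.add (hd.const_mul c)

theorem tendsto_sub_div_sub_of_tendsto_deriv {a b L : ℝ}
    (hf : ∀ᶠ y in 𝓝[<] a, DifferentiableAt ℝ f y) (hb : Tendsto f (𝓝[<] a) (𝓝 b))
    (hL : Tendsto (deriv f) (𝓝[<] a) (𝓝 L)) :
    Tendsto (fun y => (b - f y) / (a - y)) (𝓝[<] a) (𝓝 L) := by
  have hid : Tendsto (fun y : ℝ => y) (𝓝[<] a) (𝓝 a) := nhdsWithin_le_nhds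
  refine HasDerivAt.lhopital_zero_nhdsLT (f' := fun y => -deriv f y) (g' := fun _ => -1)
    (hf.mono fun y hy => hy.hasDerivAt.const_sub b)
    (Eventually.of_forall fun y => (hasDerivAt_id y).const_sub a)
    (Eventually.of_forall fun _ => by norm_num) ?_ ?_ (by simpa using hL)
  · simpa using hb.const_sub b
  · simpa using hid.const_sub a

end IncrementComparison

section PowerPrimitive

open Topology

/-- The primitive `r ↦ ∫_r^1 s^{-(n+1)} ds`, i.e. `-log r` for `n = 0` and `(r^{-n} - 1) / n`
otherwise; it linearises the relation `(Ψ⁺(x) - x) ∼ (M - x)^{n+1} / k` for all `n` at once. -/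
noncomputable def powPrimitive (n : ℕ) (r : ℝ) : ℝ :=
  ∫ s in r..1, 1 / s ^ (n + 1)

theorem continuousOn_one_div_pow (n : ℕ) : ContinuousOn (fun s : ℝ => 1 / s ^ (n + 1)) (Ioi 0) :=
  continuousOn_const.div (continuousOn_id.pow _) fun _ hs => (pow_pos hs _).ne'

theorem intervalIntegrable_one_div_pow (n : ℕ) {r s : ℝ} (hr : 0 < r) (hs : 0 < s) :
    IntervalIntegrable (fun s : ℝ => 1 / s ^ (n + 1)) volume r s :=
  ((continuousOn_one_div_pow n).mono fun _ hx => (lt_min hr hs).trans_le hx.1).intervalIntegrable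

theorem hasDerivAt_powPrimitive (n : ℕ) {r : ℝ} (hr : 0 < r) :
    HasDerivAt (powPrimitive n) (-(1 / r ^ (n + 1))) r := by
  have hcont := continuousOn_one_div_pow n
  exact intervalIntegral.integral_hasDerivAt_left (intervalIntegrable_one_div_pow n hr one_pos)
    (hcont.stronglyMeasurableAtFilter isOpen_Ioi r hr) (hcont.continuousAt (Ioi_mem_nhds hr))

theorem powPrimitive_sub_powPrimitive (n : ℕ) {r s : ℝ} (hr : 0 < r) (hs : 0 < s) :
    powPrimitive n r - powPrimitive n s =
      (powPrimitive n (r / s) - powPrimitive n 1) / s ^ n := by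
  have hsplit : ∫ x in r..s, 1 / x ^ (n + 1) = powPrimitive n r - powPrimitive n s :=
    eq_sub_of_add_eq (intervalIntegral.integral_add_adjacent_intervals
      (intervalIntegrable_one_div_pow n hr hs) (intervalIntegrable_one_div_pow n hs one_pos))
  have hscale := intervalIntegral.smul_integral_comp_mul_left
    (fun x : ℝ => 1 / x ^ (n + 1)) s (a := r / s) (b := 1)
  rw [mul_div_cancel₀ r hs.ne', mul_one, hsplit] at hscale
  have hone : powPrimitive n 1 = 0 := intervalIntegral.integral_same
  rw [← hscale, hone, sub_zero, powPrimitive, ← intervalIntegral.integral_div, smul_eq_mul,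
    ← intervalIntegral.integral_const_mul]
  congr 1 with x
  rw [mul_pow, pow_succ s]
  field_simp

theorem tendsto_powPrimitive_sub {ι : Type*} {l : Filter ι} {u v : ι → ℝ} (n : ℕ) {θ a : ℝ}
    (hθ : 0 < θ) (hu : ∀ᶠ i in l, 0 < u i) (hv : ∀ᶠ i in l, 0 < v i)
    (hratio : Tendsto (fun i => u i / v i) l (𝓝 θ))
    (ha : Tendsto (fun i => (u i - v i) / v i ^ (n + 1)) l (𝓝 a)) :
    ∃ b, Tendsto (fun i => powPrimitive n (u i) - powPrimitive n (v i)) l (𝓝 b) := by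
  have hslope : ContinuousAt (dslope (powPrimitive n) 1) θ := by
    rcases eq_or_ne θ 1 with rfl | hθ1
    · exact continuousAt_dslope_same.2 (hasDerivAt_powPrimitive n one_pos).differentiableAt
    · exact (continuousAt_dslope_of_ne hθ1).2 (hasDerivAt_powPrimitive n hθ).continuousAt
  refine ⟨a * dslope (powPrimitive n) 1 θ,
    (ha.mul (hslope.tendsto.comp hratio)).congr' ?_⟩
  filter_upwards [hu, hv] with i hui hvi
  rw [powPrimitive_sub_powPrimitive n hui hvi, ← sub_smul_dslope]
  simp only [Function.comp_apply, smul_eq_mul]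
  field_simp
  ring

end PowerPrimitive

section RunningMean

open Topology

/-- The mean of `f` over the interval from `0` to `x`, with the junk value `0` at `x = 0`. -/
noncomputable def runningMean (f : ℝ → ℝ) (x : ℝ) : ℝ :=
  (∫ y in (0 : ℝ)..x, f y) / x

variable {f : ℝ → ℝ} {x y : ℝ}

theorem sub_mul_le_integral_of_antitone (hf : Antitone f) (hxy : x ≤ y) :
    (y - x) * f y ≤ ∫ s in x..y, f s := by
  simpa using intervalIntegral.integral_mono_on (μ := volume) hxy intervalIntegrable_const
    hf.intervalIntegrable fun s hs => hf hs.2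

theorem integral_le_sub_mul_of_antitone (hf : Antitone f) (hxy : x ≤ y) :
    ∫ s in x..y, f s ≤ (y - x) * f x := by
  simpa using intervalIntegral.integral_mono_on (μ := volume) hxy hf.intervalIntegrable
    intervalIntegrable_const fun s hs => hf hs.1

theorem mul_runningMean (hx : x ≠ 0) : x * runningMean f x = ∫ s in (0 : ℝ)..x, f s :=
  mul_div_cancel₀ _ hx

theorem le_runningMean_of_antitone (hf : Antitone f) (hx : 0 < x) : f x ≤ runningMean f x := by
  rw [runningMean, le_div_iff₀ hx, mul_comm]
  simpa using sub_mul_le_integral_of_antitone hf hx.le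

theorem antitoneOn_runningMean (hf : Antitone f) : AntitoneOn (runningMean f) (Ioi 0) := by
  intro x (hx : 0 < x) y (hy : 0 < y) hxy
  have hsplit := intervalIntegral.integral_add_adjacent_intervals
    (μ := volume)
    (hf.intervalIntegrable (a := 0) (b := x)) (hf.intervalIntegrable (b := y))
  have htail : ∫ s in x..y, f s ≤ (y - x) * runningMean f x :=
    (integral_le_sub_mul_of_antitone hf hxy).trans
      (mul_le_mul_of_nonneg_left (le_runningMean_of_antitone hf hx) (sub_nonneg.2 hxy))
  refine le_of_mul_le_mul_left ?_ hy
  linarith [mul_runningMean (f := f) hx.ne', mul_runningMean (f := f) hy.ne']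

theorem monotoneOn_mul_runningMean (hf : Antitone f) (h0 : ∀ x, 0 ≤ f x) :
    MonotoneOn (fun x => x * runningMean f x) (Ioi 0) := by
  intro x (hx : 0 < x) y (hy : 0 < y) hxy
  change x * runningMean f x ≤ y * runningMean f y
  rw [mul_runningMean hx.ne', mul_runningMean hy.ne']
  exact intervalIntegral.integral_mono_interval le_rfl hx.le hxy (ae_of_all _ h0)
    hf.intervalIntegrable

theorem hasDerivAt_runningMean (hf : Continuous f) (hx : x ≠ 0) :
    HasDerivAt (runningMean f) ((f x - runningMean f x) / x) x := by
  have hint : HasDerivAt (fun u => ∫ s in (0 : ℝ)..u, f s) (f x) x :=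
    intervalIntegral.integral_hasDerivAt_right (hf.intervalIntegrable 0 x)
      hf.aestronglyMeasurable.stronglyMeasurableAtFilter hf.continuousAt
  refine (hint.div (hasDerivAt_id' x) hx).congr_deriv ?_
  rw [← mul_runningMean hx]
  field_simp

end RunningMean

section Contraction

open Topology

theorem eventually_le_of_le_mul_comp_add {X : Type*} {F : Filter X} {f r : X → ℝ} {φ : X → X}
    {l C ε : ℝ} (hl0 : 0 ≤ l) (hl1 : l < 1) (hφ : Tendsto φ F F) (hr : Tendsto r F (𝓝 0))
    (hC : ∀ᶠ x in F, f x ≤ C) (h : ∀ᶠ x in F, f x ≤ l * f (φ x) + r x) (hε : 0 < ε) :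
    ∀ᶠ x in F, f x ≤ ε := by
  have hstep : ∀ j : ℕ, ∀ᶠ x in F, f x ≤ ε / 2 + l ^ j * |C| := by
    intro j
    induction j with
    | zero => filter_upwards [hC] with x hx; linarith [le_abs_self C]
    | succ j ih =>
      filter_upwards [h, hφ.eventually ih,
        hr.eventually_le_const (show 0 < (1 - l) * (ε / 2) by nlinarith)] with x hx hxφ hxr
      calc f x ≤ l * (ε / 2 + l ^ j * |C|) + (1 - l) * (ε / 2) := by
            linarith [mul_le_mul_of_nonneg_left hxφ hl0]
        _ = ε / 2 + l ^ (j + 1) * |C| := by ring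
  have hpow : Tendsto (fun j : ℕ => l ^ j * |C|) atTop (𝓝 0) := by
    simpa using (tendsto_pow_atTop_nhds_zero_of_lt_one hl0 hl1).mul_const |C|
  obtain ⟨j, hj⟩ := (hpow.eventually_le_const (half_pos hε)).exists
  filter_upwards [hstep j] with x hx
  linarith

-- Along increasing orbits `f` is only known to grow at most linearly, so the contraction must
-- beat the growth of `φ`: this is where `φ x - x = o(x)` enters.
theorem eventually_le_of_le_mul_comp_add_of_le_id {f r φ : ℝ → ℝ} {l ε : ℝ} (hl0 : 0 ≤ l)
    (hl1 : l < 1) (hφx : ∀ x, x ≤ φ x) (hφ : (fun x => φ x - x) =o[atTop] id)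
    (hr : Tendsto r atTop (𝓝 0)) (hf : ∀ᶠ x in atTop, f x ≤ x)
    (h : ∀ᶠ x in atTop, f x ≤ l * f (φ x) + r x) (hε : 0 < ε) :
    ∀ᶠ x in atTop, f x ≤ ε := by
  set q := (1 + l) / 2 with hq
  have hφq : ∀ᶠ x in atTop, l * φ x ≤ q * x := by
    filter_upwards [hφ.bound (show 0 < (1 - l) / 2 by linarith), eventually_gt_atTop 0]
      with x hx hx0
    rw [id, Real.norm_of_nonneg hx0.le] at hx
    nlinarith [le_of_abs_le hx, mul_nonneg (sub_nonneg.2 hl1.le) (sub_nonneg.2 (hφx x))]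
  obtain ⟨X, hX⟩ := eventually_atTop.1 (hf.and (h.and (hφq.and
    (hr.eventually_le_const (show 0 < (1 - l) * ε by nlinarith)))))
  have hstep : ∀ j : ℕ, ∀ x ≥ X, f x ≤ ε + q ^ j * x := by
    intro j
    induction j with
    | zero => intro x hx; linarith [(hX x hx).1]
    | succ j ih =>
      intro x hx
      obtain ⟨-, hfx, hqx, hrx⟩ := hX x hx
      calc f x ≤ l * (ε + q ^ j * φ x) + (1 - l) * ε := by
            linarith [mul_le_mul_of_nonneg_left (ih (φ x) (hx.le.trans (hφx x))) hl0]
        _ = ε + q ^ j * (l * φ x) := by ring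
        _ ≤ ε + q ^ j * (q * x) := by gcongr
        _ = ε + q ^ (j + 1) * x := by ring
  filter_upwards [eventually_ge_atTop X] with x hx
  have hlim : Tendsto (fun j : ℕ => ε + q ^ j * x) atTop (𝓝 ε) := by
    simpa using ((tendsto_pow_atTop_nhds_zero_of_lt_one (by linarith) (by linarith)).mul_const
      x).const_add ε
  exact ge_of_tendsto' hlim fun j => hstep j x hx

end Contraction

section SqrtShift

open Topology

theorem isLittleO_sqrt_id_atTop : Real.sqrt =o[atTop] (id : ℝ → ℝ) := by
  refine Asymptotics.isLittleO_of_tendsto' ?_ ?_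
  · filter_upwards [eventually_gt_atTop 0] with x hx h using absurd h hx.ne'
  · simp only [id, Real.sqrt_div_self', one_div]
    exact tendsto_inv_atTop_zero.comp Real.tendsto_sqrt_atTop

theorem tendsto_atTop_of_abs_sub_le_sqrt {φ : ℝ → ℝ} (hφ : ∀ x, |φ x - x| ≤ √x) :
    Tendsto φ atTop atTop := by
  have hlow : ∀ᶠ x in atTop, x / 2 ≤ φ x := by
    filter_upwards [isLittleO_sqrt_id_atTop.bound (show (0 : ℝ) < 1 / 2 by norm_num),
      eventually_gt_atTop 0] with x hx hx0
    rw [id, Real.norm_of_nonneg hx0.le, Real.norm_of_nonneg (Real.sqrt_nonneg x)] at hx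
    linarith [neg_le_of_abs_le (hφ x)]
  exact tendsto_atTop_mono' _ hlow (tendsto_id.atTop_div_const two_pos)

/-- Two functions that agree up to a shift of the argument by `√x` and an error `e^{-√x/2}`: a
Gaussian smoothing of a monotone function satisfies this relation with the function itself. -/
def SqrtShiftClose (e t : ℝ → ℝ) : Prop :=
  ∃ C, ∀ᶠ x in atTop, t (x + √x) - C * Real.exp (-(√x / 2)) ≤ e x ∧
    e x ≤ t (x - √x) + C * Real.exp (-(√x / 2))

/-- The features of the running mean of a nonnegative nonincreasing function that govern its
asymptotics: it decreases, but no faster than `1 / x`. -/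
structure IsMeanLike (B : ℝ → ℝ) : Prop where
  pos : ∀ x, 0 < x → 0 < B x
  antitoneOn : AntitoneOn B (Ioi 0)
  monotoneOn_mul : MonotoneOn (fun x => x * B x) (Ioi 0)

/-- The distance from `e` to its mean `B`, in units of `B ^ (p + 1)`. -/
noncomputable def normalizedGap (B e : ℝ → ℝ) (p : ℕ) (x : ℝ) : ℝ :=
  (B x - e x) / B x ^ (p + 1)

namespace IsMeanLike

variable {B e t η φ : ℝ → ℝ} {l κ x y : ℝ} {p : ℕ}

theorem le_div_mul (hB : IsMeanLike B) (hx : 0 < x) (hxy : x ≤ y) : B x ≤ y / x * B y := by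
  rw [div_mul_eq_mul_div, le_div_iff₀ hx, mul_comm]
  exact hB.monotoneOn_mul hx (hx.trans_le hxy) hxy

theorem abs_sub_le (hB : IsMeanLike B) (hx : 4 ≤ x) (hy : |y - x| ≤ √x) :
    |B y - B x| ≤ 2 / √x * B x := by
  have hx0 : 0 < x := by linarith
  have hs : 2 ≤ √x := Real.le_sqrt_of_sq_le (by linarith)
  have hsx : √x * √x = x := Real.mul_self_sqrt hx0.le
  obtain ⟨hyl, hyu⟩ := abs_le.1 hy
  have hy2 : x / 2 ≤ y := by nlinarith
  have hbound : ∀ {a : ℝ}, 0 < a → x / 2 ≤ a → √x / a * B x ≤ 2 / √x * B x := fun ha hxa => by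
    refine mul_le_mul_of_nonneg_right ?_ (hB.pos x hx0).le
    rw [div_le_div_iff₀ ha (by positivity)]
    linarith
  rcases le_total x y with hxy | hyx
  · have hyB : B y ≤ B x := hB.antitoneOn hx0 (hx0.trans_le hxy) hxy
    rw [abs_sub_comm, abs_of_nonneg (by linarith)]
    calc B x - B y ≤ (y / x - 1) * B y := by linarith [hB.le_div_mul hx0 hxy]
      _ = (y - x) / x * B y := by field_simp
      _ ≤ √x / x * B x := by gcongr; exact (hB.pos y (by linarith)).le
      _ ≤ 2 / √x * B x := hbound hx0 (by linarith)
  · have hy0 : 0 < y := by linarith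
    rw [abs_of_nonneg (sub_nonneg.2 (hB.antitoneOn hy0 hx0 hyx))]
    calc B y - B x ≤ (x / y - 1) * B x := by linarith [hB.le_div_mul hy0 hyx]
      _ = (x - y) / y * B x := by field_simp
      _ ≤ √x / y * B x := by gcongr; exacts [(hB.pos x hx0).le, by linarith]
      _ ≤ 2 / √x * B x := hbound hy0 hy2

theorem tendsto_sub_comp_div_pow (hB : IsMeanLike B)
    (hslow : Tendsto (fun x => B x ^ p * √x) atTop atTop) (hφ : ∀ x, |φ x - x| ≤ √x) :
    Tendsto (fun x => (B x - B (φ x)) / B x ^ (p + 1)) atTop (𝓝 0) := by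
  refine squeeze_zero_norm' (a := fun x => 2 * (B x ^ p * √x)⁻¹) ?_ (by
    simpa using (tendsto_inv_atTop_zero.comp hslow).const_mul 2)
  filter_upwards [eventually_ge_atTop 4] with x hx
  have hBx := hB.pos x (by linarith)
  have hs : 0 < √x := Real.sqrt_pos.2 (by linarith)
  rw [Real.norm_eq_abs, abs_div, abs_of_pos (pow_pos hBx _), abs_sub_comm,
    div_le_iff₀ (pow_pos hBx _)]
  refine (hB.abs_sub_le hx (hφ x)).trans_eq ?_
  field_simp
  ring

theorem eventually_comp_div_le_two (hB : IsMeanLike B) (hφ : ∀ x, |φ x - x| ≤ √x) :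
    ∀ᶠ x in atTop, B (φ x) / B x ≤ 2 := by
  filter_upwards [eventually_ge_atTop 4] with x hx
  have hBx := hB.pos x (by linarith)
  have hs : 2 ≤ √x := Real.le_sqrt_of_sq_le (by linarith)
  have hle : 2 / √x * B x ≤ 1 * B x := by
    gcongr
    exact (div_le_one (by linarith)).2 hs
  rw [div_le_iff₀ hBx]
  linarith [le_of_abs_le (hB.abs_sub_le hx (hφ x))]

theorem tendsto_exp_neg_sqrt_div_pow (hB : IsMeanLike B) (p : ℕ) :
    Tendsto (fun x => Real.exp (-(√x / 2)) / B x ^ p) atTop (𝓝 0) := by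
  have hexp : Tendsto (fun x => (√x / 2) ^ (2 * p) * Real.exp (-(√x / 2))) atTop (𝓝 0) :=
    (Real.tendsto_pow_mul_exp_neg_atTop_nhds_zero (2 * p)).comp
      (Real.tendsto_sqrt_atTop.atTop_div_const two_pos)
  refine squeeze_zero' ?_ ?_ (by simpa using hexp.const_mul ((4 / B 1) ^ p))
  · filter_upwards [eventually_gt_atTop 0] with x hx
    have := hB.pos x hx
    positivity
  · filter_upwards [eventually_ge_atTop 1] with x hx
    have hx0 : 0 < x := by linarith
    have hB1 := hB.pos 1 one_pos
    have hlow : B 1 / x ≤ B x := by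
      rw [div_le_iff₀ hx0, mul_comm]
      simpa using hB.monotoneOn_mul (mem_Ioi.2 one_pos) hx0 hx
    calc Real.exp (-(√x / 2)) / B x ^ p ≤ Real.exp (-(√x / 2)) / (B 1 / x) ^ p := by gcongr
      _ = (4 / B 1) ^ p * ((√x / 2) ^ (2 * p) * Real.exp (-(√x / 2))) := by
          rw [pow_mul, div_pow √x, Real.sq_sqrt hx0.le, ← mul_assoc, ← mul_pow,
            div_eq_mul_inv, ← inv_pow, mul_comm]
          congr 2
          field_simp
          norm_num

theorem tendsto_shift_error (hB : IsMeanLike B)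
    (hslow : Tendsto (fun x => B x ^ p * √x) atTop atTop)
    (hlim : Tendsto (fun x => (B x - t x - l * (B x - e x)) / B x ^ (p + 1)) atTop (𝓝 κ))
    (hφ : ∀ x, |φ x - x| ≤ √x) :
    Tendsto (fun x => (B x - t (φ x)) / B x ^ (p + 1) -
      (l * normalizedGap B e p (φ x) + κ) * (B (φ x) / B x) ^ (p + 1)) atTop (𝓝 0) := by
  set η : ℝ → ℝ := fun x => (B x - t x - l * (B x - e x)) / B x ^ (p + 1) - κ with hη
  have hη0 : Tendsto (η ∘ φ) atTop (𝓝 0) := by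
    simpa using (hlim.sub_const κ).comp (tendsto_atTop_of_abs_sub_le_sqrt hφ)
  have hmul : Tendsto (fun x => η (φ x) * (B (φ x) / B x) ^ (p + 1)) atTop (𝓝 0) := by
    refine hη0.zero_mul_isBoundedUnder_le (isBoundedUnder_of_eventually_le (a := 2 ^ (p + 1)) ?_)
    filter_upwards [hB.eventually_comp_div_le_two hφ, eventually_gt_atTop 0,
      (tendsto_atTop_of_abs_sub_le_sqrt hφ).eventually_gt_atTop 0] with x hx hx0 hφx
    have := hB.pos x hx0
    have := hB.pos _ hφx
    rw [Function.comp_apply, Real.norm_of_nonneg (by positivity)]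
    gcongr
  have hsum := (hB.tendsto_sub_comp_div_pow hslow hφ).add hmul
  rw [add_zero] at hsum
  refine hsum.congr' ?_
  filter_upwards [eventually_gt_atTop 0,
    (tendsto_atTop_of_abs_sub_le_sqrt hφ).eventually_gt_atTop 0] with x hx0 hφx
  have := (hB.pos x hx0).ne'
  have := (hB.pos _ hφx).ne'
  simp only [hη, normalizedGap, div_pow]
  field_simp
  ring

theorem eventually_normalizedGap_le_id (hB : IsMeanLike B) (he0 : ∀ x, 0 ≤ e x)
    (hslow : Tendsto (fun x => B x ^ p * √x) atTop atTop) :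
    ∀ᶠ x in atTop, normalizedGap B e p x ≤ x := by
  filter_upwards [hslow.eventually_ge_atTop 1, eventually_ge_atTop 1] with x hx hx1
  have hBx := hB.pos x (by linarith)
  calc normalizedGap B e p x ≤ B x / B x ^ (p + 1) := by
        unfold normalizedGap
        gcongr
        exact sub_le_self _ (he0 x)
    _ = 1 / B x ^ p := by field_simp; ring
    _ ≤ √x := by rwa [div_le_iff₀' (by positivity)]
    _ ≤ x := Real.sqrt_le_self_iff.2 (.inr hx1)

theorem eventually_normalizedGap_sub_le (hB : IsMeanLike B) (he0 : ∀ x, 0 ≤ e x)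
    (heB : ∀ x, 0 < x → e x ≤ B x) (het : SqrtShiftClose e t)
    (hslow : Tendsto (fun x => B x ^ p * √x) atTop atTop) (hl0 : 0 ≤ l) (hl1 : l < 1)
    (hκ : 0 ≤ κ)
    (hlim : Tendsto (fun x => (B x - t x - l * (B x - e x)) / B x ^ (p + 1)) atTop (𝓝 κ))
    {ε : ℝ} (hε : 0 < ε) : ∀ᶠ x in atTop, normalizedGap B e p x - κ / (1 - l) ≤ ε := by
  obtain ⟨C, hC⟩ := het
  have hl : 0 < 1 - l := sub_pos.2 hl1
  have hφ : ∀ x : ℝ, |x + √x - x| ≤ √x := fun x => by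
    rw [add_sub_cancel_left, abs_of_nonneg (Real.sqrt_nonneg x)]
  have herr := (hB.tendsto_shift_error hslow hlim hφ).add
    ((hB.tendsto_exp_neg_sqrt_div_pow (p + 1)).const_mul C)
  rw [mul_zero, add_zero] at herr
  refine eventually_le_of_le_mul_comp_add_of_le_id hl0 hl1
    (fun x => le_add_of_nonneg_right (Real.sqrt_nonneg x))
    (by simpa only [add_sub_cancel_left] using isLittleO_sqrt_id_atTop) herr ?_ ?_ hε
  · exact (hB.eventually_normalizedGap_le_id he0 hslow).mono fun x hx =>
      (sub_le_self _ (by positivity)).trans hx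
  · filter_upwards [hC, eventually_gt_atTop 0] with x ⟨hxl, _⟩ hx0
    have hy0 : 0 < x + √x := by positivity
    have hBx := hB.pos x hx0
    have hBy := hB.pos _ hy0
    have hratio : (B (x + √x) / B x) ^ (p + 1) ≤ 1 :=
      pow_le_one₀ (by positivity) ((div_le_one hBx).2
        (hB.antitoneOn hx0 hy0 (le_add_of_nonneg_right (Real.sqrt_nonneg x))))
    have hgap : 0 ≤ l * normalizedGap B e p (x + √x) + κ := by
      have := sub_nonneg.2 (heB _ hy0)
      unfold normalizedGap
      positivity
    have hw : normalizedGap B e p x ≤ (B x - t (x + √x)) / B x ^ (p + 1) +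
        C * (Real.exp (-(√x / 2)) / B x ^ (p + 1)) := by
      rw [normalizedGap, ← mul_div_assoc, ← add_div]
      exact div_le_div_of_nonneg_right (by linarith) (pow_pos hBx _).le
    have hκl : κ / (1 - l) = κ + l * (κ / (1 - l)) := by field_simp; ring
    linarith [mul_le_of_le_one_right hgap hratio]

theorem eventually_sub_normalizedGap_le (hB : IsMeanLike B)
    (heB : ∀ x, 0 < x → e x ≤ B x) (het : SqrtShiftClose e t)
    (hslow : Tendsto (fun x => B x ^ p * √x) atTop atTop) (hl0 : 0 ≤ l) (hl1 : l < 1)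
    (hκ : 0 ≤ κ)
    (hlim : Tendsto (fun x => (B x - t x - l * (B x - e x)) / B x ^ (p + 1)) atTop (𝓝 κ))
    {ε : ℝ} (hε : 0 < ε) : ∀ᶠ x in atTop, κ / (1 - l) - normalizedGap B e p x ≤ ε := by
  obtain ⟨C, hC⟩ := het
  have hl : 0 < 1 - l := sub_pos.2 hl1
  have hφ : ∀ x : ℝ, |x - √x - x| ≤ √x := fun x => by
    rw [sub_sub_cancel_left, abs_neg, abs_of_nonneg (Real.sqrt_nonneg x)]
  have hφtop := tendsto_atTop_of_abs_sub_le_sqrt hφ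
  have hgap : ∀ x, 0 < x → 0 ≤ normalizedGap B e p x := fun x hx =>
    div_nonneg (sub_nonneg.2 (heB x hx)) (pow_pos (hB.pos x hx) _).le
  have herr := ((hB.tendsto_exp_neg_sqrt_div_pow (p + 1)).const_mul C).sub
    (hB.tendsto_shift_error hslow hlim hφ)
  rw [mul_zero, sub_zero] at herr
  refine eventually_le_of_le_mul_comp_add (C := κ / (1 - l)) hl0 hl1 hφtop herr ?_ ?_ hε
  · filter_upwards [eventually_gt_atTop 0] with x hx0
    linarith [hgap x hx0]
  · filter_upwards [hC, eventually_gt_atTop 0, hφtop.eventually_gt_atTop 0] with x ⟨_, hxu⟩ hx0 hy0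
    have hBx := hB.pos x hx0
    have hratio : 1 ≤ (B (x - √x) / B x) ^ (p + 1) :=
      one_le_pow₀ ((one_le_div hBx).2
        (hB.antitoneOn hy0 hx0 (sub_le_self _ (Real.sqrt_nonneg x))))
    have hgap' : 0 ≤ l * normalizedGap B e p (x - √x) + κ :=
      add_nonneg (mul_nonneg hl0 (hgap _ hy0)) hκ
    have hw : (B x - t (x - √x)) / B x ^ (p + 1) -
        C * (Real.exp (-(√x / 2)) / B x ^ (p + 1)) ≤ normalizedGap B e p x := by
      rw [normalizedGap, ← mul_div_assoc, ← sub_div]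
      exact div_le_div_of_nonneg_right (by linarith) (pow_pos hBx _).le
    have hκl : κ / (1 - l) = κ + l * (κ / (1 - l)) := by field_simp; ring
    linarith [le_mul_of_one_le_right hgap' hratio]

theorem tendsto_normalizedGap (hB : IsMeanLike B) (he0 : ∀ x, 0 ≤ e x)
    (heB : ∀ x, 0 < x → e x ≤ B x) (het : SqrtShiftClose e t)
    (hslow : Tendsto (fun x => B x ^ p * √x) atTop atTop) (hl0 : 0 ≤ l) (hl1 : l < 1)
    (hκ : 0 ≤ κ)
    (hlim : Tendsto (fun x => (B x - t x - l * (B x - e x)) / B x ^ (p + 1)) atTop (𝓝 κ)) :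
    Tendsto (normalizedGap B e p) atTop (𝓝 (κ / (1 - l))) := by
  refine Metric.nhds_basis_closedBall.tendsto_right_iff.2 fun ε hε => ?_
  filter_upwards [hB.eventually_normalizedGap_sub_le he0 heB het hslow hl0 hl1 hκ hlim hε,
    hB.eventually_sub_normalizedGap_le heB het hslow hl0 hl1 hκ hlim hε] with x hup hlow
  exact abs_le.2 ⟨by linarith, hup⟩

end IsMeanLike

end SqrtShift

section AveragedSmoothing

open Topology

theorem tendsto_atTop_of_hasDerivAt_div {f w : ℝ → ℝ} {a : ℝ} (ha : 0 < a)
    (hf : ∀ᶠ x in atTop, HasDerivAt f (w x / x) x) (hw : Tendsto w atTop (𝓝 a)) :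
    Tendsto f atTop atTop := by
  obtain ⟨X, hX⟩ := eventually_atTop.1 (hf.and
    ((hw.eventually_const_le (half_lt_self ha)).and (eventually_gt_atTop 0)))
  have hderiv : ∀ x ≥ X, HasDerivAt (fun y => f y - a / 2 * Real.log y)
      (w x / x - a / 2 * x⁻¹) x := fun x hx =>
    (hX x hx).1.sub ((Real.hasDerivAt_log (hX x hx).2.2.ne').const_mul _)
  have hmono : MonotoneOn (fun y => f y - a / 2 * Real.log y) (Ici X) := by
    refine monotoneOn_of_hasDerivWithinAt_nonneg (convex_Ici X)
      (fun x hx => (hderiv x hx).continuousAt.continuousWithinAt)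
      (fun x hx => (hderiv x (interior_subset hx)).hasDerivWithinAt) fun x hx => ?_
    obtain ⟨-, hwx, hx0⟩ := hX x (interior_subset hx)
    rw [← div_eq_mul_inv, ← sub_div]
    exact div_nonneg (sub_nonneg.2 hwx) hx0.le
  refine tendsto_atTop_mono' _ ?_ (tendsto_atTop_add_const_right _ (f X - a / 2 * Real.log X)
    (Real.tendsto_log_atTop.const_mul_atTop (half_pos ha)))
  filter_upwards [eventually_ge_atTop X] with x hx
  linarith [hmono self_mem_Ici hx hx]

theorem IsMeanLike.tendsto_pow_mul_sqrt {B e : ℝ → ℝ} (hB : IsMeanLike B)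
    (hderiv : ∀ x, 0 < x → HasDerivAt B ((e x - B x) / x) x)
    (hgap : Tendsto (normalizedGap B e 0) atTop (𝓝 0)) (p : ℕ) :
    Tendsto (fun x => B x ^ p * √x) atTop atTop := by
  have hlog : Tendsto (fun x => p * Real.log (B x) + Real.log x / 2) atTop atTop := by
    refine tendsto_atTop_of_hasDerivAt_div (w := fun x => 1 / 2 - p * normalizedGap B e 0 x)
      one_half_pos ?_ (by
        simpa only [mul_zero, sub_zero] using (hgap.const_mul (p : ℝ)).const_sub (1 / 2))
    filter_upwards [eventually_gt_atTop 0] with x hx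
    have hBx := (hB.pos x hx).ne'
    refine ((((hderiv x hx).log hBx).const_mul (p : ℝ)).add
      ((Real.hasDerivAt_log hx.ne').div_const 2)).congr_deriv ?_
    simp only [normalizedGap, zero_add, pow_one]
    field_simp
    ring
  refine (Real.tendsto_exp_atTop.comp hlog).congr' ?_
  filter_upwards [eventually_gt_atTop 0] with x hx
  rw [Function.comp_apply, Real.exp_add, ← Real.log_sqrt hx.le,
    Real.exp_log (Real.sqrt_pos.2 hx), ← Real.log_pow, Real.exp_log (pow_pos (hB.pos x hx) p)]

theorem IsMeanLike.tendsto_powPrimitive_comp_mul_sub {B e : ℝ → ℝ} {n : ℕ} {c x : ℝ}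
    (hB : IsMeanLike B) (hderiv : ∀ x, 0 < x → HasDerivAt B ((e x - B x) / x) x)
    (hgap : Tendsto (normalizedGap B e n) atTop (𝓝 c)) (hx : 0 < x) :
    Tendsto (fun α => powPrimitive n (B (α * x)) - powPrimitive n (B α)) atTop
      (𝓝 (c * Real.log x)) := by
  have hpos : ∀ᶠ y : ℝ in atTop, 0 < y := eventually_gt_atTop 0
  refine tendsto_sub_of_tendsto_div_deriv (F := atTop) (f := fun y => powPrimitive n (B y))
    (f' := fun y => normalizedGap B e n y * y⁻¹) (g := Real.log) (g' := fun y => y⁻¹)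
    ?_ ?_ ?_ ?_ tendsto_id (tendsto_id.atTop_mul_const hx) ?_
  · filter_upwards [hpos] with y hy
    have hBy := hB.pos y hy
    refine ((hasDerivAt_powPrimitive n hBy).comp y (hderiv y hy)).congr_deriv ?_
    simp only [normalizedGap]
    field_simp
    ring
  · filter_upwards [hpos] with y hy using Real.hasDerivAt_log hy.ne'
  · filter_upwards [hpos] with y hy using inv_ne_zero hy.ne'
  · refine hgap.congr' ?_
    filter_upwards [hpos] with y hy
    exact (mul_div_cancel_right₀ _ (inv_ne_zero hy.ne')).symm
  · refine tendsto_const_nhds.congr' ?_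
    filter_upwards [hpos] with α hα
    rw [Real.log_mul hα.ne' hx.ne', add_sub_cancel_left]

/-- The form taken by equation (C⁺) on the positive half-line: `ρ` is the mixture, with weights
`1 / N` and `1 - 1 / N`, of a function `e` and its running mean, and `e` is close to `t`. In the
application `ρ = M - R`, `t = M - Ψ⁺ ∘ R`, and `e` is a twofold Gaussian smoothing of `t`. -/
structure IsAveragedSmoothing (N : ℝ) (ρ t e : ℝ → ℝ) : Prop where
  one_lt : 1 < N
  continuous : Continuous e
  antitone : Antitone e
  nonneg : ∀ x, 0 ≤ e x
  pos : ∀ x, 0 < x → 0 < ρ x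
  eq_mixture : ∀ x, 0 < x → ρ x = e x / N + (1 - 1 / N) * runningMean e x
  shiftClose : SqrtShiftClose e t

namespace IsAveragedSmoothing

variable {N L κ x : ℝ} {n : ℕ} {ρ t e : ℝ → ℝ}

theorem le_runningMean (h : IsAveragedSmoothing N ρ t e) (hx : 0 < x) :
    e x ≤ runningMean e x :=
  le_runningMean_of_antitone h.antitone hx

theorem eq_runningMean_sub (h : IsAveragedSmoothing N ρ t e) (hx : 0 < x) :
    ρ x = runningMean e x - (runningMean e x - e x) / N := by
  rw [h.eq_mixture x hx]
  ring

theorem apply_le_runningMean (h : IsAveragedSmoothing N ρ t e) (hx : 0 < x) :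
    ρ x ≤ runningMean e x := by
  rw [h.eq_runningMean_sub hx]
  exact sub_le_self _ (div_nonneg (sub_nonneg.2 (h.le_runningMean hx)) (by linarith [h.one_lt]))

theorem isMeanLike (h : IsAveragedSmoothing N ρ t e) : IsMeanLike (runningMean e) where
  pos x hx := (h.pos x hx).trans_le (h.apply_le_runningMean hx)
  antitoneOn := antitoneOn_runningMean h.antitone
  monotoneOn_mul := monotoneOn_mul_runningMean h.antitone h.nonneg

theorem hasDerivAt_runningMean (h : IsAveragedSmoothing N ρ t e) (hx : 0 < x) :
    HasDerivAt (runningMean e) ((e x - runningMean e x) / x) x :=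
  _root_.hasDerivAt_runningMean h.continuous hx.ne'

theorem div_runningMean_eq (h : IsAveragedSmoothing N ρ t e) (hx : 0 < x) :
    ρ x / runningMean e x = 1 - normalizedGap (runningMean e) e 0 x / N := by
  have hBx := (h.isMeanLike.pos x hx).ne'
  rw [h.eq_runningMean_sub hx, normalizedGap, zero_add, pow_one]
  field_simp

theorem tendsto_normalizedGap_zero (h : IsAveragedSmoothing N ρ t e) (hL0 : 0 ≤ L) (hL1 : L ≤ 1)
    (hL : Tendsto (fun x => t x / ρ x) atTop (𝓝 L)) :
    Tendsto (normalizedGap (runningMean e) e 0) atTop (𝓝 ((1 - L) / (1 - L / N))) := by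
  have hN : 0 < N := by linarith [h.one_lt]
  refine h.isMeanLike.tendsto_normalizedGap (t := t) h.nonneg (fun x hx => h.le_runningMean hx)
    h.shiftClose (by simpa using Real.tendsto_sqrt_atTop) (div_nonneg hL0 hN.le)
    ((div_lt_one hN).2 (by linarith [h.one_lt])) (sub_nonneg.2 hL1) ?_
  have herr : Tendsto (fun x => (L - t x / ρ x) * (ρ x / runningMean e x)) atTop (𝓝 0) := by
    refine Tendsto.zero_mul_isBoundedUnder_le (by simpa using hL.const_sub L)
      (isBoundedUnder_of_eventually_le (a := 1) ?_)
    filter_upwards [eventually_gt_atTop 0] with x hx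
    have hBx := h.isMeanLike.pos x hx
    rw [Function.comp_apply, Real.norm_of_nonneg (div_nonneg (h.pos x hx).le hBx.le),
      div_le_one hBx]
    exact h.apply_le_runningMean hx
  have hlim := herr.const_add (1 - L)
  rw [add_zero] at hlim
  refine hlim.congr' ?_
  filter_upwards [eventually_gt_atTop 0] with x hx
  have hBx := (h.isMeanLike.pos x hx).ne'
  have hρx := (h.pos x hx).ne'
  have he : (runningMean e x - e x) / N = runningMean e x - ρ x := by
    linarith [h.eq_runningMean_sub hx]
  rw [div_mul_eq_mul_div, mul_div_assoc L, he, zero_add, pow_one]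
  field_simp
  ring

theorem tendsto_div_runningMean (h : IsAveragedSmoothing N ρ t e) (hL0 : 0 ≤ L) (hL1 : L ≤ 1)
    (hL : Tendsto (fun x => t x / ρ x) atTop (𝓝 L)) :
    Tendsto (fun x => ρ x / runningMean e x) atTop (𝓝 (1 - (1 - L) / (1 - L / N) / N)) := by
  refine (((h.tendsto_normalizedGap_zero hL0 hL1 hL).div_const N).const_sub 1).congr' ?_
  filter_upwards [eventually_gt_atTop 0] with x hx
  exact (h.div_runningMean_eq hx).symm

theorem eq_one_sub_of_tendsto (h : IsAveragedSmoothing N ρ t e)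
    (hL : Tendsto (fun x => t x / ρ x) atTop (𝓝 L))
    (hκ : Tendsto (fun x => (ρ x - t x) / ρ x ^ (0 + 1)) atTop (𝓝 κ)) : κ = 1 - L := by
  refine tendsto_nhds_unique hκ ((hL.const_sub 1).congr' ?_)
  filter_upwards [eventually_gt_atTop 0] with x hx
  rw [zero_add, pow_one, sub_div, div_self (h.pos x hx).ne']

theorem eq_one_of_tendsto (h : IsAveragedSmoothing N ρ t e) (hρ : Tendsto ρ atTop (𝓝 0))
    (hL : Tendsto (fun x => t x / ρ x) atTop (𝓝 L)) (hn : n ≠ 0)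
    (hκ : Tendsto (fun x => (ρ x - t x) / ρ x ^ (n + 1)) atTop (𝓝 κ)) : L = 1 := by
  have hlim : Tendsto (fun x => 1 - t x / ρ x) atTop (𝓝 0) := by
    refine (by simpa [hn] using hκ.mul (hρ.pow n) :
      Tendsto (fun x => (ρ x - t x) / ρ x ^ (n + 1) * ρ x ^ n) atTop (𝓝 0)).congr' ?_
    filter_upwards [eventually_gt_atTop 0] with x hx
    have hρx := (h.pos x hx).ne'
    field_simp
    ring
  linarith [tendsto_nhds_unique hlim (hL.const_sub 1)]

theorem tendsto_normalizedGap (h : IsAveragedSmoothing N ρ t e) (hL0 : 0 ≤ L) (hL1 : L ≤ 1)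
    (hρ : Tendsto ρ atTop (𝓝 0)) (hL : Tendsto (fun x => t x / ρ x) atTop (𝓝 L)) (hκ0 : 0 ≤ κ)
    (hκ : Tendsto (fun x => (ρ x - t x) / ρ x ^ (n + 1)) atTop (𝓝 κ)) :
    Tendsto (normalizedGap (runningMean e) e n) atTop (𝓝 (κ / (1 - L / N))) := by
  rcases eq_or_ne n 0 with rfl | hn
  · rw [h.eq_one_sub_of_tendsto hL hκ]
    exact h.tendsto_normalizedGap_zero hL0 hL1 hL
  obtain rfl := h.eq_one_of_tendsto hρ hL hn hκ
  have hN : 0 < N := by linarith [h.one_lt]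
  have hratio := h.tendsto_div_runningMean hL0 hL1 hL
  have hgap0 := h.tendsto_normalizedGap_zero hL0 hL1 hL
  rw [sub_self, zero_div, zero_div, sub_zero] at hratio
  rw [sub_self, zero_div] at hgap0
  refine h.isMeanLike.tendsto_normalizedGap h.nonneg (fun x hx => h.le_runningMean hx)
    h.shiftClose
    (h.isMeanLike.tendsto_pow_mul_sqrt (fun x hx => h.hasDerivAt_runningMean hx) hgap0 n)
    (by positivity) ((div_lt_one hN).2 h.one_lt) hκ0 ?_
  refine (by simpa using hκ.mul (hratio.pow (n + 1)) : Tendsto (fun x =>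
    (ρ x - t x) / ρ x ^ (n + 1) * (ρ x / runningMean e x) ^ (n + 1)) atTop (𝓝 κ)).congr' ?_
  filter_upwards [eventually_gt_atTop 0] with x hx
  have hρx := (h.pos x hx).ne'
  have hρe := h.eq_runningMean_sub hx
  rw [div_pow, div_mul_div_cancel₀ (pow_ne_zero _ hρx)]
  congr 1
  linear_combination hρe

theorem exists_tendsto_powPrimitive_sub (h : IsAveragedSmoothing N ρ t e) (hL0 : 0 ≤ L)
    (hL1 : L ≤ 1) (hL : Tendsto (fun x => t x / ρ x) atTop (𝓝 L))
    (hgap : Tendsto (normalizedGap (runningMean e) e n) atTop (𝓝 κ)) :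
    ∃ b, Tendsto (fun x => powPrimitive n (ρ x) - powPrimitive n (runningMean e x)) atTop
      (𝓝 b) := by
  have hN : 0 < N := by linarith [h.one_lt]
  have hpos : ∀ᶠ x : ℝ in atTop, 0 < x := eventually_gt_atTop 0
  refine tendsto_powPrimitive_sub n (a := -(κ / N)) ?_ (hpos.mono h.pos)
    (hpos.mono h.isMeanLike.pos) (h.tendsto_div_runningMean hL0 hL1 hL) ?_
  · have hLN : 0 < 1 - L / N := sub_pos.2 ((div_lt_one hN).2 (by linarith [h.one_lt]))
    have hle : (1 - L) / (1 - L / N) ≤ 1 :=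
      (div_le_one hLN).2 (by linarith [div_le_self hL0 h.one_lt.le])
    exact sub_pos.2 ((div_lt_one hN).2 (hle.trans_lt h.one_lt))
  · refine ((hgap.div_const N).neg).congr' ?_
    filter_upwards [hpos] with x hx
    rw [h.eq_runningMean_sub hx, normalizedGap]
    ring

theorem tendsto_powPrimitive_comp_mul_sub (h : IsAveragedSmoothing N ρ t e) (hL0 : 0 ≤ L)
    (hL1 : L ≤ 1) (hρ : Tendsto ρ atTop (𝓝 0)) (hL : Tendsto (fun x => t x / ρ x) atTop (𝓝 L))
    (hκ0 : 0 ≤ κ) (hκ : Tendsto (fun x => (ρ x - t x) / ρ x ^ (n + 1)) atTop (𝓝 κ))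
    (hx : 0 < x) :
    Tendsto (fun α => powPrimitive n (ρ (α * x)) - powPrimitive n (ρ α)) atTop
      (𝓝 (κ / (1 - L / N) * Real.log x)) := by
  have hgap := h.tendsto_normalizedGap hL0 hL1 hρ hL hκ0 hκ
  obtain ⟨b, hb⟩ := h.exists_tendsto_powPrimitive_sub hL0 hL1 hL hgap
  have hsum := ((hb.comp (tendsto_id.atTop_mul_const hx)).sub hb).add
    (h.isMeanLike.tendsto_powPrimitive_comp_mul_sub (fun y hy => h.hasDerivAt_runningMean hy)
      hgap hx)
  rw [sub_self, zero_add] at hsum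
  refine hsum.congr fun α => ?_
  simp only [Function.comp_apply, id_eq]
  ring

end IsAveragedSmoothing

end AveragedSmoothing

section Smoothing

open Topology

variable {μ : Measure ℝ} {f : ℝ → ℝ} {a b c s x : ℝ}

/-- The expected value of `f (x - Z)` for a random variable `Z` of law `μ`. -/
noncomputable def smoothing (μ : Measure ℝ) (f : ℝ → ℝ) (x : ℝ) : ℝ :=
  ∫ z, f (x - z) ∂μ

theorem integrable_comp_const_sub [IsFiniteMeasure μ] (hf : Measurable f)
    (hab : ∀ x, f x ∈ Icc a b) (x : ℝ) : Integrable (fun z => f (x - z)) μ :=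
  Integrable.of_mem_Icc a b (hf.comp (measurable_const.sub measurable_id)).aemeasurable
    (ae_of_all _ fun _ => hab _)

theorem monotone_smoothing [IsFiniteMeasure μ] (hf : Monotone f) (hab : ∀ x, f x ∈ Icc a b) :
    Monotone (smoothing μ f) := fun x y hxy =>
  integral_mono (integrable_comp_const_sub hf.measurable hab x)
    (integrable_comp_const_sub hf.measurable hab y) fun z => hf (sub_le_sub_right hxy z)

theorem smoothing_mem_Icc [IsProbabilityMeasure μ] (hf : Measurable f)
    (hab : ∀ x, f x ∈ Icc a b) (x : ℝ) : smoothing μ f x ∈ Icc a b := by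
  have hint := integrable_comp_const_sub (μ := μ) hf hab x
  constructor
  · simpa [smoothing] using integral_mono (integrable_const a) hint fun z => (hab (x - z)).1
  · simpa [smoothing] using integral_mono hint (integrable_const b) fun z => (hab (x - z)).2

theorem continuous_smoothing [IsFiniteMeasure μ] [NullSingletonClass μ] (hf : Monotone f)
    (hab : ∀ x, f x ∈ Icc a b) : Continuous (smoothing μ f) := by
  refine continuous_iff_continuousAt.2 fun x => ?_
  refine continuousAt_of_dominated (bound := fun _ => max |a| |b|)
    (Eventually.of_forall fun y =>
      (integrable_comp_const_sub hf.measurable hab y).aestronglyMeasurable)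
    (Eventually.of_forall fun y => ae_of_all _ fun z =>
      abs_le_max_abs_abs (hab (y - z)).1 (hab (y - z)).2) (integrable_const _) ?_
  have hcount : {z | ¬ContinuousAt f (x - z)}.Countable :=
    hf.countable_not_continuousAt.preimage (sub_right_injective)
  have hnull : ∀ᵐ z ∂μ, ContinuousAt f (x - z) := ae_iff.2 (hcount.measure_zero μ)
  filter_upwards [hnull] with z hz
  exact ContinuousAt.comp (f := fun y => y - z) hz (continuousAt_id.sub continuousAt_const)

theorem le_smoothing [IsProbabilityMeasure μ] (hf : Measurable f) (hab : ∀ x, f x ∈ Icc a b)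
    (hcb : c ≤ b) (h : ∀ y, x - s < y → c ≤ f y) :
    c - (b - a) * μ.real {z | s ≤ |z|} ≤ smoothing μ f x := by
  have hT : MeasurableSet {z : ℝ | s ≤ |z|} := measurableSet_le measurable_const measurable_abs
  have hind : Integrable ({z : ℝ | s ≤ |z|}.indicator fun _ => b - a) μ :=
    (integrable_const _).indicator hT
  have hint := integral_mono ((integrable_const c).sub hind)
    (integrable_comp_const_sub hf hab x) fun z => ?_
  · rwa [integral_sub' (integrable_const c) hind, integral_indicator_const _ hT, integral_const,
      probReal_univ, one_smul, smul_eq_mul, mul_comm] at hint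
  · simp only [Pi.sub_apply]
    by_cases hz : s ≤ |z|
    · rw [indicator_of_mem (show z ∈ {z : ℝ | s ≤ |z|} from hz)]
      linarith [(hab (x - z)).1]
    · rw [indicator_of_notMem (show z ∉ {z : ℝ | s ≤ |z|} from hz), sub_zero]
      exact h _ (by linarith [le_abs_self z])

theorem smoothing_le [IsProbabilityMeasure μ] (hf : Measurable f) (hab : ∀ x, f x ∈ Icc a b)
    (hac : a ≤ c) (h : ∀ y, y < x + s → f y ≤ c) :
    smoothing μ f x ≤ c + (b - a) * μ.real {z | s ≤ |z|} := by
  have hT : MeasurableSet {z : ℝ | s ≤ |z|} := measurableSet_le measurable_const measurable_abs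
  have hind : Integrable ({z : ℝ | s ≤ |z|}.indicator fun _ => b - a) μ :=
    (integrable_const _).indicator hT
  have hint := integral_mono (integrable_comp_const_sub hf hab x)
    ((integrable_const c).add hind) fun z => ?_
  · rwa [integral_add' (integrable_const c) hind, integral_indicator_const _ hT, integral_const,
      probReal_univ, one_smul, smul_eq_mul, mul_comm] at hint
  · simp only [Pi.add_apply]
    by_cases hz : s ≤ |z|
    · rw [indicator_of_mem (show z ∈ {z : ℝ | s ≤ |z|} from hz)]
      linarith [(hab (x - z)).2]
    · rw [indicator_of_notMem (show z ∉ {z : ℝ | s ≤ |z|} from hz), add_zero]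
      exact h _ (by linarith [neg_abs_le z])

end Smoothing

section GaussianKernel

open ProbabilityTheory

variable {f : ℝ → ℝ} {σ a b s x : ℝ} {N : ℝ}

/-- The centered Gaussian law with variance `σ²`, whose density is `gq σ`. -/
noncomputable abbrev centeredGaussian (σ : ℝ) : Measure ℝ :=
  gaussianReal 0 (σ ^ 2).toNNReal

theorem gq_eq_gaussianPDFReal (hσ : 0 < σ) : gq σ = gaussianPDFReal 0 (σ ^ 2).toNNReal := by
  ext z
  rw [gq, gaussianPDFReal, Real.coe_toNNReal _ (sq_nonneg σ), sub_zero,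
    Real.sqrt_mul Real.two_pi_pos.le, Real.sqrt_sq hσ.le, mul_comm σ, div_eq_inv_mul]

theorem toNNReal_sq_ne_zero (hσ : 0 < σ) : (σ ^ 2).toNNReal ≠ 0 :=
  (Real.toNNReal_pos.2 (pow_pos hσ 2)).ne'

theorem integrable_gq (hσ : 0 < σ) : Integrable (gq σ) :=
  gq_eq_gaussianPDFReal hσ ▸ integrable_gaussianPDFReal 0 _

theorem integral_mul_gq (hσ : 0 < σ) (f : ℝ → ℝ) (x : ℝ) :
    ∫ y, f y * gq σ (x - y) = smoothing (centeredGaussian σ) f x := by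
  rw [smoothing, integral_gaussianReal_eq_integral_smul (toNNReal_sq_ne_zero hσ),
    ← gq_eq_gaussianPDFReal hσ, ← integral_sub_left_eq_self _ _ x]
  simp only [smul_eq_mul, sub_sub_cancel, mul_comm]

theorem exists_centeredGaussian_tail_le (σ : ℝ) :
    ∃ K, ∀ s, (centeredGaussian σ).real {z | s ≤ |z|} ≤ K * Real.exp (-s) := by
  set v := (σ ^ 2).toNNReal
  refine ⟨2 * Real.exp (v / 2), fun s => ?_⟩
  have hright : (centeredGaussian σ).real {z | s ≤ z} ≤ Real.exp (v / 2) * Real.exp (-s) := by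
    have h := measure_ge_le_exp_mul_mgf (X := id) s zero_le_one
      (integrable_exp_mul_gaussianReal (μ := 0) (v := v) 1)
    rw [mgf_id_gaussianReal] at h
    simpa [mul_comm] using h
  have hleft : (centeredGaussian σ).real {z | z ≤ -s} ≤ Real.exp (v / 2) * Real.exp (-s) := by
    have h := measure_le_le_exp_mul_mgf (X := id) (-s) (neg_nonpos.2 zero_le_one)
      (integrable_exp_mul_gaussianReal (μ := 0) (v := v) (-1))
    rw [mgf_id_gaussianReal] at h
    simpa [mul_comm] using h
  calc (centeredGaussian σ).real {z | s ≤ |z|}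
      ≤ (centeredGaussian σ).real ({z | s ≤ z} ∪ {z | z ≤ -s}) :=
        measureReal_mono fun z (hz : s ≤ |z|) => (le_abs.1 hz).imp_right le_neg_of_le_neg
    _ ≤ Real.exp (v / 2) * Real.exp (-s) + Real.exp (v / 2) * Real.exp (-s) :=
        (measureReal_union_le _ _).trans (add_le_add hright hleft)
    _ = 2 * Real.exp (v / 2) * Real.exp (-s) := by ring

/-- The kernel `q(σ, x - z) / N + (N - 1) q̄(σ, x, z) / N` of equation (C⁺). -/
noncomputable def mixedKernel (σ N x z : ℝ) : ℝ :=
  1 / N * gq σ (x - z) + (N - 1) / N * gqbar σ x z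

theorem gqbar_mul_eq (hx : 0 < x) (z c : ℝ) :
    gqbar σ x z * c = (∫ y in Ioc 0 x, c * gq σ (y - z)) / x := by
  rw [gqbar, if_neg hx.ne', intervalIntegral.integral_of_le hx.le, integral_const_mul]
  ring

theorem integrable_mul_gq_sub (hσ : 0 < σ) (hf : Measurable f) (hab : ∀ x, f x ∈ Icc a b)
    (ν : Measure ℝ) [IsFiniteMeasure ν] :
    Integrable (fun p : ℝ × ℝ => f p.1 * gq σ (p.2 - p.1)) (volume.prod ν) := by
  have hgq : Integrable (fun p : ℝ × ℝ => gq σ (p.2 - p.1)) (volume.prod ν) := by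
    have h := (integrable_const (μ := ν) (1 : ℝ)).convolution_integrand
      (ContinuousLinearMap.mul ℝ ℝ) (integrable_gq hσ).comp_neg
    simpa using h
  exact hgq.bdd_mul (c := max |a| |b|) (hf.comp measurable_fst).aestronglyMeasurable
    (ae_of_all _ fun p => abs_le_max_abs_abs (hab p.1).1 (hab p.1).2)

theorem integrable_gqbar_mul (hσ : 0 < σ) (hf : Measurable f) (hab : ∀ x, f x ∈ Icc a b)
    (hx : 0 < x) : Integrable fun z => gqbar σ x z * f z := by
  simp only [gqbar_mul_eq hx]
  exact (integrable_mul_gq_sub hσ hf hab _).integral_prod_left.div_const x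

theorem integral_gqbar_mul (hσ : 0 < σ) (hf : Measurable f) (hab : ∀ x, f x ∈ Icc a b)
    (hx : 0 < x) :
    ∫ z, gqbar σ x z * f z = runningMean (smoothing (centeredGaussian σ) f) x := by
  simp only [gqbar_mul_eq hx]
  rw [integral_div, integral_integral_swap (integrable_mul_gq_sub hσ hf hab _), runningMean,
    intervalIntegral.integral_of_le hx.le]
  simp only [integral_mul_gq hσ]

theorem integrable_gq_mul (hσ : 0 < σ) (hf : Measurable f) (hab : ∀ x, f x ∈ Icc a b) (x : ℝ) :
    Integrable fun z => gq σ (x - z) * f z :=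
  ((integrable_gq hσ).comp_sub_left x).mul_bdd (c := max |a| |b|) hf.aestronglyMeasurable
    (ae_of_all _ fun z => abs_le_max_abs_abs (hab z).1 (hab z).2)

theorem integrable_mixedKernel_mul (hσ : 0 < σ) (hf : Measurable f)
    (hab : ∀ x, f x ∈ Icc a b) (hx : 0 < x) : Integrable fun z => mixedKernel σ N x z * f z := by
  simp only [mixedKernel, add_mul, mul_assoc]
  exact ((integrable_gq_mul hσ hf hab x).const_mul _).add
    ((integrable_gqbar_mul hσ hf hab hx).const_mul _)

theorem integral_mixedKernel_mul (hσ : 0 < σ) (hf : Measurable f)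
    (hab : ∀ x, f x ∈ Icc a b) (hx : 0 < x) :
    ∫ z, mixedKernel σ N x z * f z = 1 / N * smoothing (centeredGaussian σ) f x +
      (N - 1) / N * runningMean (smoothing (centeredGaussian σ) f) x := by
  simp only [mixedKernel, add_mul, mul_assoc]
  rw [integral_add ((integrable_gq_mul hσ hf hab x).const_mul _)
    ((integrable_gqbar_mul hσ hf hab hx).const_mul _), integral_const_mul, integral_const_mul,
    integral_gqbar_mul hσ hf hab hx, ← integral_mul_gq hσ f x]
  simp only [mul_comm (gq σ _)]

end GaussianKernel

section EquationC

open ProbabilityTheory Topology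

variable {f : ℝ → ℝ} {σ c M : ℝ}

/-- The function integrated against the mixed kernel in equation (C⁺): the Gaussian smoothing of
`f` on the positive half-line, and the constant `c` on the other one. -/
noncomputable def smoothedProfile (σ c : ℝ) (f : ℝ → ℝ) (z : ℝ) : ℝ :=
  if 0 < z then smoothing (centeredGaussian σ) f z else c

theorem smoothedProfile_mem_Icc (hf : Monotone f) (hcM : ∀ x, f x ∈ Icc c M) (z : ℝ) :
    smoothedProfile σ c f z ∈ Icc c M := by
  rw [smoothedProfile]
  split_ifs
  · exact smoothing_mem_Icc (μ := centeredGaussian σ) hf.measurable hcM z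
  · exact left_mem_Icc.2 ((hcM z).1.trans (hcM z).2)

theorem monotone_smoothedProfile (hf : Monotone f) (hcM : ∀ x, f x ∈ Icc c M) :
    Monotone (smoothedProfile σ c f) := by
  intro x y hxy
  rcases lt_or_ge 0 x with hx | hx
  · rw [smoothedProfile, smoothedProfile, if_pos hx, if_pos (hx.trans_le hxy)]
    exact monotone_smoothing hf hcM hxy
  · rw [smoothedProfile, if_neg hx.not_gt]
    exact (smoothedProfile_mem_Icc hf hcM y).1

theorem eventually_smoothing_smoothedProfile_bounds (hf : Monotone f)
    (hcM : ∀ x, f x ∈ Icc c M) :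
    ∃ C, ∀ᶠ x in atTop,
      f (x - √x) - C * Real.exp (-(√x / 2)) ≤
        smoothing (centeredGaussian σ) (smoothedProfile σ c f) x ∧
      smoothing (centeredGaussian σ) (smoothedProfile σ c f) x ≤
        f (x + √x) + C * Real.exp (-(√x / 2)) := by
  obtain ⟨K, hK⟩ := exists_centeredGaussian_tail_le σ
  have hcM0 : 0 ≤ M - c := sub_nonneg.2 ((hcM 0).1.trans (hcM 0).2)
  have hH := (monotone_smoothedProfile (σ := σ) hf hcM).measurable
  have hHcM := smoothedProfile_mem_Icc (σ := σ) hf hcM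
  refine ⟨2 * ((M - c) * K), ?_⟩
  filter_upwards [eventually_ge_atTop 1] with x hx
  have hsx : √x ≤ x := Real.sqrt_le_self_iff.2 (Or.inr hx)
  have hs0 : 0 ≤ √x := Real.sqrt_nonneg x
  set s := √x / 2 with hs
  set δ := (M - c) * (centeredGaussian σ).real {z | s ≤ |z|}
  have hδ0 : 0 ≤ δ := mul_nonneg hcM0 measureReal_nonneg
  have hδK : δ ≤ (M - c) * K * Real.exp (-s) :=
    (mul_le_mul_of_nonneg_left (hK s) hcM0).trans_eq (mul_assoc _ _ _).symm
  constructor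
  · have hprofile : ∀ y, x - s < y → f (x - √x) - δ ≤ smoothedProfile σ c f y := by
      intro y hy
      rw [smoothedProfile, if_pos (by linarith)]
      exact le_smoothing hf.measurable hcM (hcM _).2 fun w hw => hf (by linarith)
    have := le_smoothing (μ := centeredGaussian σ) hH hHcM
      ((sub_le_self _ hδ0).trans (hcM _).2) hprofile
    linarith
  · have hprofile : ∀ y, y < x + s → smoothedProfile σ c f y ≤ f (x + √x) + δ := by
      intro y hy
      rw [smoothedProfile]
      split_ifs
      · exact smoothing_le hf.measurable hcM (hcM _).1 fun w hw => hf (by linarith)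
      · exact le_add_of_le_of_nonneg (hcM _).1 hδ0
    have := smoothing_le (μ := centeredGaussian σ) hH hHcM
      (le_add_of_le_of_nonneg (hcM _).1 hδ0) hprofile
    linarith

theorem sqrtShiftClose_sub_smoothing (hf : Monotone f) (hcM : ∀ x, f x ∈ Icc c M) :
    SqrtShiftClose (fun x => M - smoothing (centeredGaussian σ) (smoothedProfile σ c f) x)
      (fun x => M - f x) := by
  obtain ⟨C, hC⟩ := eventually_smoothing_smoothedProfile_bounds (σ := σ) hf hcM
  refine ⟨C, hC.mono fun x hx => ⟨?_, ?_⟩⟩ <;> linarith [hx.1, hx.2]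

theorem runningMean_const_sub (hf : Continuous f) {x : ℝ} (hx : x ≠ 0) :
    runningMean (fun y => M - f y) x = M - runningMean f x := by
  rw [runningMean, runningMean, intervalIntegral.integral_sub intervalIntegrable_const
    (hf.intervalIntegrable _ _), intervalIntegral.integral_const, sub_div, smul_eq_mul,
    sub_zero, mul_div_cancel_left₀ _ hx]

variable {Ω : Type*} [MeasurableSpace Ω] {P : Measure Ω} {V : Ω → ℝ} {N : ℕ} {R : ℝ → ℝ}

namespace SolvesCp

theorem eq_integral_mixedKernel_mul (h : SolvesCp P V σ N R) (hσ : 0 < σ)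
    (hΨ : Monotone fun y => Psip P V (R y)) (hΨM : ∀ y, Psip P V (R y) ∈ Icc (∫ ω, V ω ∂P) M)
    {x : ℝ} (hx : 0 < x) :
    R x = ∫ z, mixedKernel σ N x z *
      smoothedProfile σ (∫ ω, V ω ∂P) (fun y => Psip P V (R y)) z := by
  have hint := integrable_mixedKernel_mul (N := N) hσ
    (monotone_smoothedProfile (σ := σ) hΨ hΨM).measurable (smoothedProfile_mem_Icc hΨ hΨM) hx
  rw [h x, ← intervalIntegral.integral_Iic_add_Ioi hint.integrableOn hint.integrableOn (b := 0),
    integral_Iic_eq_integral_Iio, add_comm]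
  congr 1
  · rw [mul_comm, ← integral_mul_const]
    refine setIntegral_congr_fun measurableSet_Iio fun z hz => ?_
    simp only [smoothedProfile, if_neg (lt_asymm (mem_Iio.1 hz)), mixedKernel]
  · refine setIntegral_congr_fun measurableSet_Ioi fun z hz => ?_
    simp only [smoothedProfile, if_pos (mem_Ioi.1 hz), mixedKernel, integral_mul_gq hσ]

theorem isAveragedSmoothing (h : SolvesCp P V σ N R) (hσ : 0 < σ) (hN : 2 ≤ N)
    (hΨ : Monotone fun y => Psip P V (R y)) (hΨM : ∀ y, Psip P V (R y) ∈ Icc (∫ ω, V ω ∂P) M)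
    (hR : ∀ x, R x < M) :
    IsAveragedSmoothing N (fun x => M - R x) (fun x => M - Psip P V (R x)) (fun x => M -
      smoothing (centeredGaussian σ)
        (smoothedProfile σ (∫ ω, V ω ∂P) fun y => Psip P V (R y)) x) := by
  have hN1 : (1 : ℝ) < N := by exact_mod_cast hN
  have hmono := monotone_smoothedProfile (σ := σ) hΨ hΨM
  have hmem := smoothedProfile_mem_Icc (σ := σ) hΨ hΨM
  have := nullSingletonClass_gaussianReal (μ := 0) (toNNReal_sq_ne_zero hσ)
  have hcont := continuous_smoothing (μ := centeredGaussian σ) hmono hmem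
  refine ⟨hN1, continuous_const.sub hcont,
    fun x y hxy => sub_le_sub_left (monotone_smoothing hmono hmem hxy) M,
    fun x => sub_nonneg.2 (smoothing_mem_Icc hmono.measurable hmem x).2,
    fun x _ => sub_pos.2 (hR x), fun x hx => ?_, sqrtShiftClose_sub_smoothing hΨ hΨM⟩
  rw [runningMean_const_sub hcont hx.ne', h.eq_integral_mixedKernel_mul hσ hΨ hΨM hx,
    integral_mixedKernel_mul hσ hmono.measurable hmem hx]
  have : (N : ℝ) ≠ 0 := by positivity
  field_simp
  ring

end SolvesCp

end EquationC

section TailExpectation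

open Topology

variable {Ω : Type*} [MeasurableSpace Ω] {P : Measure Ω} {V : Ω → ℝ} {M y c a b d L k : ℝ}

section IsFiniteMeasure

variable [IsFiniteMeasure P]

theorem Phip_sub_mul_Pip (hV : Integrable V P) (y c : ℝ) :
    Phip P V y - c * Pip P V y = ∫ ω in {ω | V ω > y}, (V ω - c) ∂P := by
  rw [integral_sub hV.integrableOn (integrable_const c), setIntegral_const, smul_eq_mul, mul_comm]
  rfl

theorem integral_max_sub_zero (hV : Integrable V P) (c : ℝ) :
    ∫ ω, max (V ω - c) 0 ∂P = Phip P V c - c * Pip P V c := by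
  have hmeas : NullMeasurableSet {ω | V ω > c} P :=
    nullMeasurableSet_lt aemeasurable_const hV.aemeasurable
  rw [Phip_sub_mul_Pip hV, ← setIntegral_eq_integral_of_forall_compl_eq_zero
    (s := {ω | V ω > c}) fun ω hω => max_eq_right (sub_nonpos.2 (not_lt.1 hω))]
  exact setIntegral_congr_ae₀ hmeas
    (ae_of_all _ fun ω hω => max_eq_left (sub_pos.2 (show c < V ω from hω)).le)

theorem setIntegral_sub_le (hV : Integrable V P) (s : Set Ω) (c : ℝ) :
    ∫ ω in s, (V ω - c) ∂P ≤ Phip P V c - c * Pip P V c := by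
  have hVc : Integrable (fun ω => V ω - c) P := hV.sub (integrable_const c)
  rw [← integral_max_sub_zero hV]
  exact (integral_mono hVc.integrableOn hVc.pos_part.integrableOn fun ω => le_max_left _ _).trans
    (setIntegral_le_integral hVc.pos_part (ae_of_all _ fun ω => le_max_right _ _))

theorem Phip_sub_le_mul_Pip_sub (hV : Integrable V P) (a b : ℝ) :
    Phip P V a - Phip P V b ≤ b * (Pip P V a - Pip P V b) := by
  have h := setIntegral_sub_le hV {ω | V ω > a} b
  rw [← Phip_sub_mul_Pip hV] at h
  linarith

theorem mul_Pip_le_Phip (hV : Integrable V P) (y : ℝ) : y * Pip P V y ≤ Phip P V y := by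
  simpa using setIntegral_sub_le hV ∅ y

theorem Phip_le_mul_Pip (hV : Integrable V P) (hVM : ∀ᵐ ω ∂P, V ω ≤ M) (y : ℝ) :
    Phip P V y ≤ M * Pip P V y := by
  rw [← sub_nonpos, Phip_sub_mul_Pip hV]
  exact integral_nonpos_of_ae (ae_restrict_of_ae (hVM.mono fun ω hω => sub_nonpos.2 hω))

theorem antitone_Pip : Antitone (Pip P V) := fun _ _ hab =>
  measureReal_mono fun _ hω => hab.trans_lt hω

theorem Pip_pos (hVpos : ∀ y < M, 0 < P {ω | V ω > y}) (hy : y < M) : 0 < Pip P V y :=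
  ENNReal.toReal_pos (hVpos y hy).ne' (measure_ne_top _ _)

theorem Psip_mem_Icc (hV : Integrable V P) (hVM : ∀ᵐ ω ∂P, V ω ≤ M)
    (hy : 0 < Pip P V y) : Psip P V y ∈ Icc y M :=
  ⟨(le_div_iff₀ hy).2 (mul_Pip_le_Phip hV y), (div_le_iff₀ hy).2 (Phip_le_mul_Pip hV hVM y)⟩

theorem Psip_le_Psip (hV : Integrable V P) (hab : a ≤ b) (hb : 0 < Pip P V b) :
    Psip P V a ≤ Psip P V b := by
  have hPi : Pip P V b ≤ Pip P V a := antitone_Pip hab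
  have hbΨ : b ≤ Psip P V b := (le_div_iff₀ hb).2 (mul_Pip_le_Phip hV b)
  refine (div_le_iff₀ (hb.trans_le hPi)).2 ?_
  calc Phip P V a ≤ Phip P V b + b * (Pip P V a - Pip P V b) := by
        linarith [Phip_sub_le_mul_Pip_sub hV a b]
    _ ≤ Psip P V b * Pip P V b + Psip P V b * (Pip P V a - Pip P V b) :=
        add_le_add (div_mul_cancel₀ _ hb.ne').ge
          (mul_le_mul_of_nonneg_right hbΨ (sub_nonneg.2 hPi))
    _ = Psip P V b * Pip P V a := by ring

theorem hasDerivAt_Phip (hV : Integrable V P) (hd : HasDerivAt (Pip P V) d y) :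
    HasDerivAt (Phip P V) (y * d) y := by
  have hPi : Tendsto (fun x => Pip P V y - Pip P V x) (𝓝 y) (𝓝 0) := by
    simpa using hd.continuousAt.tendsto.const_sub (Pip P V y)
  have hΦ : HasDerivAt (fun x => Phip P V x - y * Pip P V x) 0 y := by
    rw [hasDerivAt_iff_isLittleO]
    refine Asymptotics.IsBigO.trans_isLittleO
      (g := fun x => (Pip P V y - Pip P V x) * (x - y)) (.of_norm_le fun x => ?_) ?_
    · have hupper := Phip_sub_le_mul_Pip_sub hV x y
      have hlower := Phip_sub_le_mul_Pip_sub hV y x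
      rw [smul_zero, sub_zero, Real.norm_eq_abs, abs_of_nonpos (by linarith)]
      linarith
    · simpa using ((Asymptotics.isLittleO_one_iff ℝ).2 hPi).mul_isBigO
        (Asymptotics.isBigO_refl (fun x => x - y) (𝓝 y))
  simpa using hΦ.fun_add (hd.const_mul y)

theorem hasDerivAt_Psip (hV : Integrable V P) (hy : 0 < Pip P V y)
    (hd : HasDerivAt (Pip P V) d y) :
    HasDerivAt (Psip P V) (-(d / Pip P V y) * (Psip P V y - y)) y := by
  refine ((hasDerivAt_Phip hV hd).div hd hy.ne').congr_deriv ?_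
  rw [Psip]
  field_simp
  ring

theorem tendsto_sub_Psip_div_sub (hV : Integrable V P) (hVM : ∀ᵐ ω ∂P, V ω ≤ M)
    (hVpos : ∀ y < M, 0 < P {ω | V ω > y})
    (hdiff : ∀ᶠ y in 𝓝[<] M, DifferentiableAt ℝ (Pip P V) y)
    (hL : Tendsto (deriv (Psip P V)) (𝓝[<] M) (𝓝 L)) :
    Tendsto (fun y => (M - Psip P V y) / (M - y)) (𝓝[<] M) (𝓝 L) := by
  have hmem : ∀ᶠ y in 𝓝[<] M, Psip P V y ∈ Icc y M :=
    eventually_mem_nhdsWithin.mono fun y hy => Psip_mem_Icc hV hVM (Pip_pos hVpos hy)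
  refine tendsto_sub_div_sub_of_tendsto_deriv ?_ ?_ hL
  · filter_upwards [hdiff, self_mem_nhdsWithin] with y hd hy
    exact (hasDerivAt_Psip hV (Pip_pos hVpos hy) hd.hasDerivAt).differentiableAt
  · exact tendsto_of_tendsto_of_tendsto_of_le_of_le' nhdsWithin_le_nhds tendsto_const_nhds
      (hmem.mono fun _ h => h.1) (hmem.mono fun _ h => h.2)

theorem tendsto_deriv_Pip_div_Pip_mul_pow {n : ℕ} (hV : Integrable V P)
    (hVpos : ∀ y < M, 0 < P {ω | V ω > y})
    (hdiff : ∀ᶠ y in 𝓝[<] M, DifferentiableAt ℝ (Pip P V) y)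
    (hL : Tendsto (deriv (Psip P V)) (𝓝[<] M) (𝓝 L)) (hk : 0 < k)
    (hlim : Tendsto (fun y => (Psip P V y - y) / (M - y) ^ (n + 1)) (𝓝[<] M) (𝓝 (1 / k))) :
    Tendsto (fun y => deriv (Pip P V) y / Pip P V y * (M - y) ^ (n + 1)) (𝓝[<] M)
      (𝓝 (-(L * k))) := by
  have hquot := (hL.div hlim (one_div_pos.2 hk).ne').neg
  rw [div_div_eq_mul_div, div_one] at hquot
  refine hquot.congr' ?_
  filter_upwards [hdiff, self_mem_nhdsWithin, hlim.eventually_ne (one_div_pos.2 hk).ne']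
    with y hd hy hne
  have hΨ : Psip P V y - y ≠ 0 := fun h => hne (by rw [h, zero_div])
  have hy0 : M - y ≠ 0 := (sub_pos.2 hy).ne'
  have hPi := (Pip_pos hVpos hy).ne'
  rw [Pi.div_apply, (hasDerivAt_Psip hV (Pip_pos hVpos hy) hd.hasDerivAt).deriv]
  field_simp

theorem tendsto_log_Pip_sub {ι : Type*} {l : Filter ι} {u v : ι → ℝ} {n : ℕ}
    (hV : Integrable V P) (hVpos : ∀ y < M, 0 < P {ω | V ω > y})
    (hdiff : ∀ᶠ y in 𝓝[<] M, DifferentiableAt ℝ (Pip P V) y)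
    (hL : Tendsto (deriv (Psip P V)) (𝓝[<] M) (𝓝 L)) (hk : 0 < k)
    (hlim : Tendsto (fun y => (Psip P V y - y) / (M - y) ^ (n + 1)) (𝓝[<] M) (𝓝 (1 / k)))
    (hu : Tendsto u l (𝓝[<] M)) (hv : Tendsto v l (𝓝[<] M))
    (hd : Tendsto (fun i => powPrimitive n (M - v i) - powPrimitive n (M - u i)) l (𝓝 d)) :
    Tendsto (fun i => Real.log (Pip P V (v i)) - Real.log (Pip P V (u i))) l
      (𝓝 (-(L * k) * d)) := by
  have hlt : ∀ᶠ y in 𝓝[<] M, y < M := self_mem_nhdsWithin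
  refine tendsto_sub_of_tendsto_div_deriv (f := fun y => Real.log (Pip P V y))
    (g := fun y => powPrimitive n (M - y)) (f' := fun y => deriv (Pip P V) y / Pip P V y)
    (g' := fun y => 1 / (M - y) ^ (n + 1)) ?_ ?_ ?_ ?_ hu hv hd
  · filter_upwards [hdiff, hlt] with y hdy hy
    exact hdy.hasDerivAt.log (Pip_pos hVpos hy).ne'
  · filter_upwards [hlt] with y hy
    simpa using (hasDerivAt_powPrimitive n (sub_pos.2 hy)).comp_const_sub M y
  · exact hlt.mono fun y hy => one_div_ne_zero (pow_ne_zero _ (sub_pos.2 hy).ne')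
  · simpa only [div_div_eq_mul_div, div_one] using
      tendsto_deriv_Pip_div_Pip_mul_pow hV hVpos hdiff hL hk hlim

end IsFiniteMeasure

theorem integral_le_Psip [IsProbabilityMeasure P] (hV : Integrable V P) (hy : 0 < Pip P V y) :
    ∫ ω, V ω ∂P ≤ Psip P V y := by
  refine (le_div_iff₀ hy).2 ?_
  have hPi1 : Pip P V y ≤ 1 := measureReal_le_one
  have hΦ := setIntegral_sub_le hV univ y
  rw [setIntegral_univ, integral_sub hV (integrable_const y), integral_const, probReal_univ,
    one_smul] at hΦ
  rcases le_total y (∫ ω, V ω ∂P) with h | h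
  · linarith [mul_le_mul_of_nonneg_right h (sub_nonneg.2 hPi1)]
  · exact (mul_le_mul_of_nonneg_right h hy.le).trans (mul_Pip_le_Phip hV y)

end TailExpectation

section RegularVariation

open Topology

theorem tendsto_div_rpow_of_tendsto_log_sub {ι : Type*} {l : Filter ι} {f g : ι → ℝ} {r x : ℝ}
    (hf : ∀ i, 0 < f i) (hg : ∀ i, 0 < g i) (hx : 0 < x)
    (h : Tendsto (fun i => Real.log (f i) - Real.log (g i)) l (𝓝 (Real.log x * r))) :
    Tendsto (fun i => f i / g i) l (𝓝 (x ^ r)) := by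
  rw [Real.rpow_def_of_pos hx]
  refine ((Real.continuous_exp.tendsto _).comp h).congr fun i => ?_
  rw [Function.comp_apply, Real.exp_sub, Real.exp_log (hf i), Real.exp_log (hg i)]

end RegularVariation

theorem stmt17_general {Ω : Type*} [MeasurableSpace Ω] (P : Measure Ω) [IsProbabilityMeasure P]
    (V : Ω → ℝ) (hV : Integrable V P) (M : ℝ) (hVM : ∀ᵐ ω ∂P, V ω ≤ M)
    (hVpos : ∀ y < M, 0 < P {ω | V ω > y}) (σ : ℝ) (hσ : 0 < σ) (N : ℕ) (hN : 2 ≤ N)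
    (hdiff : ∀ᶠ y in nhdsWithin M (Iio M), DifferentiableAt ℝ (Pip P V) y)
    (L : ℝ) (hL : Tendsto (deriv (Psip P V)) (nhdsWithin M (Iio M)) (nhds L))
    (n : ℕ) (k : ℝ) (hk : 0 < k)
    (hlim : Tendsto (fun x : ℝ => (Psip P V x - x) / (M - x) ^ (n + 1))
      (nhdsWithin M (Iio M)) (nhds (1 / k)))
    (R : ℝ → ℝ) (hRm : Monotone R) (hRlt : ∀ x, R x < M) (hRtop : Tendsto R atTop (nhds M))
    (hRsol : SolvesCp P V σ N R) :
    ∀ x : ℝ, 0 < x →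
      Tendsto (fun α : ℝ => Pip P V (R (α * x)) / Pip P V (R α)) atTop
        (nhds (x ^ (-(L / (1 - L / (N:ℝ)))))) := by
  intro x hx
  have hR : Tendsto R atTop (nhdsWithin M (Iio M)) :=
    tendsto_nhdsWithin_iff.2 ⟨hRtop, Eventually.of_forall hRlt⟩
  have hPi : ∀ y, 0 < Pip P V (R y) := fun y => Pip_pos hVpos (hRlt y)
  have hΨR : ∀ y, Psip P V (R y) ∈ Icc (R y) M := fun y => Psip_mem_Icc hV hVM (hPi y)
  have hsmooth := hRsol.isAveragedSmoothing hσ hN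
    (fun y z hyz => Psip_le_Psip hV (hRm hyz) (hPi z))
    (fun y => ⟨integral_le_Psip hV (hPi y), (hΨR y).2⟩) hRlt
  have hslope : Tendsto (fun y => (M - Psip P V (R y)) / (M - R y)) atTop (nhds L) :=
    (tendsto_sub_Psip_div_sub hV hVM hVpos hdiff hL).comp hR
  have hL0 : 0 ≤ L := ge_of_tendsto' hslope fun y =>
    div_nonneg (sub_nonneg.2 (hΨR y).2) (sub_pos.2 (hRlt y)).le
  have hL1 : L ≤ 1 := le_of_tendsto' hslope fun y =>
    div_le_one_of_le₀ (sub_le_sub_left (hΨR y).1 M) (sub_pos.2 (hRlt y)).le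
  have hincrement := hsmooth.tendsto_powPrimitive_comp_mul_sub (n := n) hL0 hL1
    (by simpa using hRtop.const_sub M) hslope (one_div_pos.2 hk).le
    (by simpa only [Function.comp_def, sub_sub_sub_cancel_left] using hlim.comp hR) hx
  have hlog := tendsto_log_Pip_sub hV hVpos hdiff hL hk hlim hR
    (hR.comp (tendsto_id.atTop_mul_const hx)) hincrement
  have hindex : -(L * k) * (1 / k / (1 - L / N) * Real.log x) =
      Real.log x * -(L / (1 - L / N)) := by
    linear_combination -(L / (1 - L / N) * Real.log x) * mul_one_div_cancel hk.ne'
  exact tendsto_div_rpow_of_tendsto_log_sub (fun α => hPi (α * x)) hPi hx (hindex ▸ hlog)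

/-- If `N ≥ 2`, `Π⁺` is `C¹` on `(m,M)`, `Ψ⁺ₓ(M) = lim_{x→M⁻} (Ψ⁺)'(x)` exists,
and `(Ψ⁺(x) − x)/(M − x)^{n+1} → 1/k` as `x → M⁻` for some integer `n ≥ 0` and `k ∈ (0,∞)`, then
for any nondecreasing solution `R` of (C⁺) with `R < M` and `R → M` at `∞`, the function
`Π⁺ ∘ R` is regularly varying at `∞` of index `−Ψ⁺ₓ(M)/(1 − Ψ⁺ₓ(M)/N)`. -/
theorem stmt17 {Ω : Type*} [MeasurableSpace Ω] (P : Measure Ω) [IsProbabilityMeasure P]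
    (V : Ω → ℝ) (hVmeas : Measurable V) (hV : Integrable V P)
    (m M : ℝ) (hsupp : SuppIoo P V m M)
    (σ : ℝ) (hσ : 0 < σ) (N : ℕ) (hN : 2 ≤ N)
    (hC1 : ContDiffOn ℝ 1 (Pip P V) (Set.Ioo m M))
    (L : ℝ) (hL : Tendsto (deriv (Psip P V)) (nhdsWithin M (Set.Iio M)) (nhds L))
    (n : ℕ) (k : ℝ) (hk : 0 < k)
    (hlim : Tendsto (fun x : ℝ => (Psip P V x - x) / (M - x) ^ (n + 1))
      (nhdsWithin M (Set.Iio M)) (nhds (1 / k)))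
    (R : ℝ → ℝ) (hRm : Monotone R) (hRr : ∀ x, R x ∈ Set.Icc m M)
    (hRlt : ∀ x, R x < M) (hRtop : Tendsto R atTop (nhds M))
    (hRsol : SolvesCp P V σ N R) :
    ∀ x : ℝ, 0 < x →
      Tendsto (fun α : ℝ => Pip P V (R (α * x)) / Pip P V (R α)) atTop
        (nhds (x ^ (-(L / (1 - L / (N:ℝ)))))) :=
  stmt17_general P V hV M (hsupp.2.1.mono fun _ h => h.2) hsupp.2.2.1 σ hσ N hN
    (mem_of_superset (Ioo_mem_nhdsLT hsupp.1) fun _ hy =>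
      (hC1.differentiableOn one_ne_zero).differentiableAt (Ioo_mem_nhds hy.1 hy.2))
    L hL n k hk hlim R hRm hRlt hRtop hRsol
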